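/- arXiv:1508.04891 — 5 statements merged into one kernel-verified Lean document; each statement's English description precedes it below -/
import Mathlib

section
/- Let E be an infinite-dimensional reflexive real Banach space, T : E → E a non-zero compact linear operator, φ : E → ℝ a lower semicontinuous, convex and coercive functional, I ⊂ ℝ a compact interval with 0 ∈ I, and ψ : I → ℝ a lower semicontinuous convex function. Then for each r > φ(0), one has sup_{x∈X} inf_{λ∈I} (φ(T(x) − λx) + ψ(λ)) = r + ψ(0), where X = {x ∈ E : φ(T(x)) ≤ r}. -/
/-!
The bound `≤` is the choice `l = 0` in the infimum. For the bound `≥`, fix a small `ε > 0`. Since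
`φ` is continuous (`continuous_of_convexOn_of_lowerSemicontinuous`) and coercive, and `T ≠ 0`, some
`x₀` satisfies `φ (T x₀) = r - ε`. Let `f` be the linear part of an affine minorant of `φ` that
loses at most `ε` at `T x₀`. As `T` is compact and `ker f` is infinite-dimensional, there is a
vector `y ∈ ker f` with `‖y‖` as large and `‖T y‖` as small as needed
(`exists_mem_ker_large_small_image`). Put `x = x₀ + y`:

* `φ (T x) ≤ r`, because `T x` is close to `T x₀`;
* for small `|l|`, the affine minorant gives
  `φ (T x - l • x) ≥ r - 2ε + f (T y) - l * f x₀`, because `f y = 0`, and `ψ l > ψ 0 - ε` by lower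
  semicontinuity;
* for the remaining `l`, the vector `T x - l • x` has large norm, so coercivity of `φ` wins, `ψ`
  being bounded below on `[a, b]`.
-/

open Filter Topology Set

/-- By Baire's theorem some sublevel set `{φ ≤ n}` has an interior point, and a convex function that
is bounded above near one point is continuous. -/
lemma continuous_of_convexOn_of_lowerSemicontinuous
    {E : Type*} [NormedAddCommGroup E] [NormedSpace ℝ E] [CompleteSpace E] {φ : E → ℝ}
    (hlsc : LowerSemicontinuous φ) (hconv : ConvexOn ℝ univ φ) : Continuous φ := by
  have hclosed : ∀ n : ℕ, IsClosed {x | φ x ≤ n} := fun n => hlsc.isClosed_preimage (n : ℝ)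
  have hunion : (⋃ n : ℕ, {x | φ x ≤ n}) = univ :=
    eq_univ_of_forall fun x => mem_iUnion.2 (exists_nat_ge (φ x))
  obtain ⟨n, x, hx⟩ := nonempty_interior_of_iUnion_of_closed hclosed hunion
  have hbdd : ∃ x₀ ∈ (univ : Set E), (𝓝 x₀).IsBoundedUnder (· ≤ ·) φ :=
    ⟨x, mem_univ x, n, eventually_map.2 (mem_interior_iff_mem_nhds.1 hx)⟩
  exact continuousOn_univ.1 (((hconv.continuousOn_tfae isOpen_univ univ_nonempty).out 3 1).1 hbdd)

/-- If the conclusion failed, `T` would be bounded below on `ker f`, so the identity of `ker f`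
would be compact, and `E` would be finite-dimensional. -/
lemma exists_mem_ker_large_small_image
    {E : Type*} [NormedAddCommGroup E] [NormedSpace ℝ E] [CompleteSpace E]
    (hinfdim : ¬ FiniteDimensional ℝ E) (T : E →L[ℝ] E) (hT : IsCompactOperator T)
    (f : E →L[ℝ] ℝ) {M η : ℝ} (hM : 0 < M) (hη : 0 < η) :
    ∃ y : E, f y = 0 ∧ ‖y‖ = M ∧ ‖T y‖ ≤ η := by
  by_contra! hcon
  let F : Submodule ℝ E := LinearMap.ker (f : E →ₗ[ℝ] ℝ)
  have hFclosed : IsClosed (F : Set E) := f.isClosed_ker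
  have : CompleteSpace F := hFclosed.completeSpace_coe
  let G : F →L[ℝ] E := T.comp F.subtypeL
  have hG : IsCompactOperator G := hT.comp_clm F.subtypeL
  have hbelow : ∀ y : F, ‖y‖ ≤ (M / η).toNNReal * ‖G y‖ := by
    intro y
    rw [Real.coe_toNNReal _ (by positivity)]
    rcases eq_or_ne y 0 with rfl | hy
    · simp
    have hy' : 0 < ‖y‖ := norm_pos_iff.2 hy
    -- rescale `y` to norm `M`
    have h := hcon ((M / ‖y‖) • (y : E))
      (by have : f (y : E) = 0 := y.2
          simp [this])
      (by rw [norm_smul, Real.norm_of_nonneg (by positivity)]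
          exact div_mul_cancel₀ M hy'.ne')
    rw [map_smul, norm_smul, Real.norm_of_nonneg (by positivity), div_mul_eq_mul_div,
      lt_div_iff₀ hy'] at h
    change ‖y‖ ≤ M / η * ‖T y‖
    rw [div_mul_eq_mul_div, le_div_iff₀ hη]
    linarith
  have hemb : IsClosedEmbedding G :=
    (G.antilipschitz_of_bound hbelow).isClosedEmbedding G.uniformContinuous
  have hid : IsCompactOperator (id : F → F) := by
    obtain ⟨K, hK, hKn⟩ := hG
    exact ⟨G ⁻¹' K, hemb.isCompact_preimage hK, hKn⟩
  have hFfin : FiniteDimensional ℝ F := FiniteDimensional.of_isCompactOperator_id hid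
  have hquot : FiniteDimensional ℝ (E ⧸ F) :=
    Module.Finite.equiv (LinearMap.quotKerEquivRange (f : E →ₗ[ℝ] ℝ)).symm
  exact hinfdim (Module.Finite.of_submodule_quotient F)

lemma exists_norm_le_of_coercive {E : Type*} [NormedAddCommGroup E] {φ : E → ℝ}
    (h : Tendsto φ (comap norm atTop) atTop) (C : ℝ) : ∃ R, ∀ z, R ≤ ‖z‖ → C ≤ φ z := by
  have := h.eventually_ge_atTop C
  rw [eventually_comap, eventually_atTop] at this
  obtain ⟨R, hR⟩ := this
  exact ⟨R, fun z hz => hR _ hz z rfl⟩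

/-- `φ ∘ T` attains every value above `φ 0`, already on a ray. -/
lemma exists_comp_eq_of_coercive
    {E : Type*} [NormedAddCommGroup E] [NormedSpace ℝ E] {T : E →L[ℝ] E} (hT0 : T ≠ 0)
    {φ : E → ℝ} (hcont : Continuous φ) (hcoer : Tendsto φ (comap norm atTop) atTop)
    {s : ℝ} (hs : φ 0 ≤ s) : ∃ x, φ (T x) = s := by
  obtain ⟨u, hu⟩ : ∃ u, T u ≠ 0 := by
    by_contra! h
    exact hT0 (ContinuousLinearMap.ext h)
  obtain ⟨R, hR⟩ := exists_norm_le_of_coercive hcoer s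
  have hu' : 0 < ‖T u‖ := norm_pos_iff.2 hu
  have hg : Continuous fun t : ℝ => φ (T (t • u)) := by fun_prop
  have hbig : s ≤ φ (T ((|R| / ‖T u‖) • u)) := by
    apply hR
    rw [map_smul, norm_smul, Real.norm_of_nonneg (by positivity), div_mul_cancel₀ _ hu'.ne']
    exact le_abs_self R
  obtain ⟨t, ht⟩ := mem_range_of_exists_le_of_exists_ge hg ⟨0, by simpa using hs⟩ ⟨_, hbig⟩
  exact ⟨t • u, ht⟩

/-- The lower bound, in `ε`-form: some admissible `x` has infimum at least `r + ψ 0 - 5 * ε`. -/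
lemma exists_forall_le_of_small
    {E : Type*} [NormedAddCommGroup E] [NormedSpace ℝ E] [CompleteSpace E]
    (hinfdim : ¬ FiniteDimensional ℝ E)
    (T : E →L[ℝ] E) (hTcpt : IsCompactOperator T) (hT0 : T ≠ 0)
    (φ : E → ℝ) (hφlsc : LowerSemicontinuous φ) (hφconv : ConvexOn ℝ univ φ)
    (hφcoer : Tendsto φ (comap norm atTop) atTop)
    (a b : ℝ) (h0I : (0 : ℝ) ∈ Icc a b)
    (ψ : ℝ → ℝ) (hψlsc : LowerSemicontinuousOn ψ (Icc a b))
    (r ε : ℝ) (hε : 0 < ε) (hr : φ 0 ≤ r - ε) :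
    ∃ x, φ (T x) ≤ r ∧ ∀ l ∈ Icc a b, r + ψ 0 - 5 * ε ≤ φ (T x - l • x) + ψ l := by
  have hcont := continuous_of_convexOn_of_lowerSemicontinuous hφlsc hφconv
  obtain ⟨x₀, hx₀⟩ := exists_comp_eq_of_coercive hT0 hcont hφcoer hr
  obtain ⟨f, c, hfc, hfx⟩ := ConvexOn.exists_affine_le_of_lt (𝕜 := ℝ) (mem_univ (T x₀))
    (show φ (T x₀) - ε < φ (T x₀) by linarith) isClosed_univ
    (lowerSemicontinuousOn_univ_iff.2 hφlsc) hφconv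
  have hf : ∀ z, f z + c ≤ φ z := fun z => by simpa using hfc ⟨z, mem_univ z⟩
  replace hfx : f (T x₀) + c = φ (T x₀) - ε := by simpa using hfx
  obtain ⟨l₀, -, hl₀⟩ := hψlsc.exists_isMinOn ⟨0, h0I⟩ isCompact_Icc
  obtain ⟨R, hR⟩ := exists_norm_le_of_coercive hφcoer (r + ψ 0 - ψ l₀)
  obtain ⟨δ₁, hδ₁, hψδ⟩ := Metric.mem_nhdsWithin_iff.1 (hψlsc 0 h0I (ψ 0 - ε) (by linarith))
  obtain ⟨η₁, hη₁, hφη⟩ := Metric.continuousAt_iff.1 (hcont.continuousAt (x := T x₀)) ε hε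
  obtain ⟨δ, hδ, hδδ₁, hδf⟩ : ∃ δ > 0, δ ≤ δ₁ ∧ δ * |f x₀| ≤ ε := by
    refine ⟨min δ₁ (ε / (|f x₀| + 1)), by positivity, min_le_left _ _, ?_⟩
    calc _ ≤ ε / (|f x₀| + 1) * (|f x₀| + 1) := by
          gcongr
          · exact min_le_right _ _
          · linarith
      _ = ε := div_mul_cancel₀ _ (by positivity)
  obtain ⟨η, hη, hηη₁, hηf⟩ : ∃ η > 0, η < η₁ ∧ ‖f‖ * η ≤ ε := by
    refine ⟨min (η₁ / 2) (ε / (‖f‖ + 1)), by positivity,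
      (min_le_left _ _).trans_lt (by linarith), ?_⟩
    calc _ ≤ (‖f‖ + 1) * (ε / (‖f‖ + 1)) := by
          gcongr
          · linarith
          · exact min_le_right _ _
      _ = ε := mul_div_cancel₀ _ (by positivity)
  -- `‖y‖` is chosen so that `δ * (‖y‖ - ‖x₀‖) - ‖T x₀‖ - η ≥ R`
  obtain ⟨y, hfy, hy, hTy⟩ := exists_mem_ker_large_small_image hinfdim T hTcpt f
    (M := (|R| + ‖T x₀‖ + η) / δ + ‖x₀‖) (by positivity) hη
  have hfTy : -ε ≤ f (T y) := by
    have h1 : |f (T y)| ≤ ε := (f.le_opNorm (T y)).trans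
      ((mul_le_mul_of_nonneg_left hTy (norm_nonneg f)).trans hηf)
    exact (abs_le.1 h1).1
  refine ⟨x₀ + y, ?_, fun l hl => ?_⟩
  · have h1 := hφη (x := T (x₀ + y)) (by
      rw [dist_eq_norm, map_add, add_sub_cancel_left]
      linarith)
    rw [Real.dist_eq] at h1
    linarith [(abs_lt.1 h1).2]
  · rcases lt_or_ge |l| δ with hlδ | hlδ
    · have hψl : ψ 0 - ε < ψ l := hψδ ⟨by simpa using hlδ.trans_le hδδ₁, hl⟩
      have h1 := hf (T (x₀ + y) - l • (x₀ + y))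
      simp only [map_sub, map_add, map_smul, smul_eq_mul, hfy, add_zero] at h1
      have h2 : l * f x₀ ≤ ε := calc
        l * f x₀ ≤ |l| * |f x₀| := by rw [← abs_mul]; exact le_abs_self _
        _ ≤ δ * |f x₀| := by gcongr
        _ ≤ ε := hδf
      simp only [map_add]
      linarith
    · have hmin : ψ l₀ ≤ ψ l := hl₀ hl
      have hxy : (|R| + ‖T x₀‖ + η) / δ ≤ ‖x₀ + y‖ := by
        have h1 := norm_sub_le (x₀ + y) x₀
        rw [add_sub_cancel_left] at h1
        linarith
      have hlx : |R| + ‖T x₀‖ + η ≤ ‖l • (x₀ + y)‖ := by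
        rw [norm_smul, Real.norm_eq_abs]
        calc |R| + ‖T x₀‖ + η = δ * ((|R| + ‖T x₀‖ + η) / δ) := by field_simp
          _ ≤ |l| * ‖x₀ + y‖ := by gcongr
      have hTx : ‖T (x₀ + y)‖ ≤ ‖T x₀‖ + η := by
        rw [map_add]
        exact (norm_add_le _ _).trans (by linarith)
      have hbig := hR (T (x₀ + y) - l • (x₀ + y)) (by
        have h1 := norm_sub_norm_le (l • (x₀ + y)) (T (x₀ + y))
        rw [norm_sub_rev] at h1
        linarith [le_abs_self R])
      linarith

/-- **Ricceri's application of the minimax theorem.**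
Let `E` be an infinite-dimensional reflexive real Banach space, `T : E → E` a
non-zero compact linear operator, `φ : E → ℝ` a lower semicontinuous, convex and
coercive functional, `I = [a,b]` a compact interval containing `0`, and
`ψ : I → ℝ` lower semicontinuous and convex. Then for each `r > φ(0)`,
`sup_{x∈X} inf_{λ∈I} (φ(T x − λ x) + ψ(λ)) = r + ψ(0)`,
where `X = {x ∈ E : φ(T x) ≤ r}`. -/
theorem ricceri_application
    {E : Type*} [NormedAddCommGroup E] [NormedSpace ℝ E] [CompleteSpace E]
    (hinfdim : ¬ FiniteDimensional ℝ E)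
    (hrefl : Function.Surjective (NormedSpace.inclusionInDoubleDual ℝ E))
    (T : E →L[ℝ] E) (hTcpt : IsCompactOperator T) (hT0 : T ≠ 0)
    (φ : E → ℝ) (hφlsc : LowerSemicontinuous φ) (hφconv : ConvexOn ℝ Set.univ φ)
    (hφcoer : Filter.Tendsto φ (Filter.comap norm Filter.atTop) Filter.atTop)
    (a b : ℝ) (hab : a ≤ b) (h0I : (0 : ℝ) ∈ Set.Icc a b)
    (ψ : ℝ → ℝ) (hψlsc : LowerSemicontinuousOn ψ (Set.Icc a b))
    (hψconv : ConvexOn ℝ (Set.Icc a b) ψ)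
    (r : ℝ) (hr : φ 0 < r) :
    (⨆ x ∈ {x : E | φ (T x) ≤ r}, ⨅ l ∈ Set.Icc a b,
        ((φ (T x - l • x) + ψ l : ℝ) : EReal)) = ((r + ψ 0 : ℝ) : EReal) := by
  apply le_antisymm
  · refine iSup₂_le fun x hx => (iInf₂_le 0 h0I).trans ?_
    rw [EReal.coe_le_coe_iff]
    have hx' : φ (T x) ≤ r := hx
    simpa using hx'
  · refine EReal.ge_of_forall_gt_iff_ge.1 fun z hz => ?_
    rw [EReal.coe_lt_coe_iff] at hz
    -- `ε` keeps `r - ε` above `φ 0` and makes the loss `5 * ε` at most `r + ψ 0 - z`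
    obtain ⟨x, hx, hxl⟩ := exists_forall_le_of_small hinfdim T hTcpt hT0 φ hφlsc hφconv hφcoer
      a b h0I ψ hψlsc r (min (r - φ 0) ((r + ψ 0 - z) / 5))
      (lt_min (by linarith) (by linarith)) (by linarith [min_le_left (r - φ 0) ((r + ψ 0 - z) / 5)])
    refine le_iSup₂_of_le x hx (le_iInf₂ fun l hl => ?_)
    rw [EReal.coe_le_coe_iff]
    linarith [hxl l hl, min_le_right (r - φ 0) ((r + ψ 0 - z) / 5)]
end

section
/- Let E be an infinite-dimensional reflexive real Banach space, let X be the open unit ball of E, and let φ be a continuous linear functional on E with ‖φ‖ = 1 (operator norm). Define f : X × [0,1] → ℝ by f(x,λ) = |1/(1 − φ(x)) − λ((1/(1 − φ(x)))² + 1)|. Then sup_{x∈X} inf_{λ∈[0,1]} f(x,λ) = 0, while for every λ ∈ [0,1] the function f(·,λ) is unbounded above on X, so that inf_{λ∈[0,1]} sup_{x∈X} f(x,λ) = +∞ (in the extended reals). -/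
/-!
Put `t = 1 / (1 - φ x)`, which is positive on the open unit ball. The choice
`l = t / (t ^ 2 + 1) ∈ [0, 1]` makes the expression vanish, so every inner infimum is `0`.
On the other hand `‖φ‖ = 1` lets `φ x` come arbitrarily close to `1` on the ball, so `t` is
unbounded there (`exists_lt_one_div_one_sub`), and for fixed `l ≥ 0` the quantity
`|t - l * (t ^ 2 + 1)|` tends to `∞` with `t`: linearly if `l = 0`, quadratically if `l > 0`.
-/

lemma one_sub_pos_of_mem_ball {E : Type*} [NormedAddCommGroup E] [NormedSpace ℝ E]
    (φ : E →L[ℝ] ℝ) (hφ : ‖φ‖ = 1) {x : E} (hx : x ∈ Metric.ball (0 : E) 1) :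
    0 < 1 - φ x := by
  have h1 : ‖x‖ < 1 := by simpa using hx
  have h2 := φ.le_opNorm x
  rw [hφ, one_mul, Real.norm_eq_abs] at h2
  linarith [le_abs_self (φ x)]

lemma exists_lt_one_div_one_sub {E : Type*} [NormedAddCommGroup E] [NormedSpace ℝ E]
    (φ : E →L[ℝ] ℝ) (hφ : ‖φ‖ = 1) {N : ℝ} (hN : 0 < N) :
    ∃ x ∈ Metric.ball (0 : E) 1, N < 1 / (1 - φ x) := by
  have hr : 1 - 1 / N < ‖φ‖ := by
    rw [hφ]
    linarith [one_div_pos.mpr hN]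
  obtain ⟨x, hx, hlt⟩ := φ.exists_lt_apply_of_lt_opNorm hr
  -- Replacing `x` by `-x` if necessary removes the absolute value.
  obtain ⟨y, hy, hylt⟩ : ∃ y ∈ Metric.ball (0 : E) 1, 1 - 1 / N < φ y := by
    rw [Real.norm_eq_abs] at hlt
    rcases abs_cases (φ x) with ⟨h, _⟩ | ⟨h, _⟩
    · exact ⟨x, by simpa using hx, by rwa [h] at hlt⟩
    · exact ⟨-x, by simpa using hx, by rwa [h, ← map_neg] at hlt⟩
  have hpos := one_sub_pos_of_mem_ball φ hφ hy
  exact ⟨y, hy, (lt_one_div hN hpos).mpr (by linarith)⟩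

/-- **Example 2 of Ricceri's paper.**
Let `E` be an infinite-dimensional reflexive real Banach space, `X` the open
unit ball of `E`, and `φ` a continuous linear functional with `‖φ‖ = 1`.
Define `f(x,λ) = |1/(1 − φ(x)) − λ((1/(1 − φ(x)))² + 1)|` on `X × [0,1]`. Then
`sup_{x∈X} inf_{λ∈[0,1]} f(x,λ) = 0`, while for every `λ ∈ [0,1]` the function
`f(·,λ)` is unbounded above on `X`, so that
`inf_{λ∈[0,1]} sup_{x∈X} f(x,λ) = +∞`. -/
theorem ricceri_example_open_ball
    {E : Type*} [NormedAddCommGroup E] [NormedSpace ℝ E] [CompleteSpace E]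
    (hinfdim : ¬ FiniteDimensional ℝ E)
    (hrefl : Function.Surjective (NormedSpace.inclusionInDoubleDual ℝ E))
    (φ : E →L[ℝ] ℝ) (hφ : ‖φ‖ = 1) :
    (⨆ x ∈ Metric.ball (0 : E) 1, ⨅ l ∈ Set.Icc (0 : ℝ) 1,
        ((|1 / (1 - φ x) - l * ((1 / (1 - φ x)) ^ 2 + 1)| : ℝ) : EReal)) = (0 : EReal) ∧
    (∀ l ∈ Set.Icc (0 : ℝ) 1, ∀ M : ℝ, ∃ x ∈ Metric.ball (0 : E) 1,
        M < |1 / (1 - φ x) - l * ((1 / (1 - φ x)) ^ 2 + 1)|) ∧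
    (⨅ l ∈ Set.Icc (0 : ℝ) 1, ⨆ x ∈ Metric.ball (0 : E) 1,
        ((|1 / (1 - φ x) - l * ((1 / (1 - φ x)) ^ 2 + 1)| : ℝ) : EReal)) = (⊤ : EReal) := by
  have unbdd : ∀ l ∈ Set.Icc (0 : ℝ) 1, ∀ M : ℝ, ∃ x ∈ Metric.ball (0 : E) 1,
      M < |1 / (1 - φ x) - l * ((1 / (1 - φ x)) ^ 2 + 1)| := by
    intro l hl M
    -- For `l > 0`, `t > 2 / l` gives `l * t ^ 2 - t > t`; for `l = 0` the junk value
    -- `2 / 0 = 0` is harmless.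
    have h2l : 0 ≤ 2 / l := div_nonneg zero_le_two hl.1
    obtain ⟨x, hx, ht⟩ := exists_lt_one_div_one_sub φ hφ
      (N := |M| + 1 + 2 / l) (by positivity)
    refine ⟨x, hx, ?_⟩
    generalize 1 / (1 - φ x) = t at ht ⊢
    have hM := le_abs_self M
    have hM0 := abs_nonneg M
    rcases hl.1.eq_or_lt with h0 | h0
    · subst h0
      refine lt_of_lt_of_le ?_ (le_abs_self _)
      linarith
    · have h3 : 2 < t * l := (div_lt_iff₀ h0).mp (by linarith)
      refine lt_of_lt_of_le ?_ (neg_le_abs _)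
      nlinarith
  refine ⟨?_, unbdd, ?_⟩
  · have inner : ∀ x ∈ Metric.ball (0 : E) 1, (⨅ l ∈ Set.Icc (0 : ℝ) 1,
        ((|1 / (1 - φ x) - l * ((1 / (1 - φ x)) ^ 2 + 1)| : ℝ) : EReal)) = 0 := by
      intro x hx
      have ht : 0 < 1 / (1 - φ x) := one_div_pos.mpr (one_sub_pos_of_mem_ball φ hφ hx)
      generalize 1 / (1 - φ x) = t at ht ⊢
      have hd : 0 < t ^ 2 + 1 := by positivity
      apply le_antisymm
      · refine iInf₂_le_of_le (t / (t ^ 2 + 1))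
          ⟨by positivity, (div_le_one hd).mpr (by nlinarith [sq_nonneg (t - 1)])⟩ ?_
        rw [div_mul_cancel₀ _ hd.ne', sub_self, abs_zero, EReal.coe_zero]
      · exact le_iInf₂ fun l _ => EReal.coe_nonneg.mpr (abs_nonneg _)
    rw [biSup_congr inner]
    exact biSup_const ⟨0, Metric.mem_ball_self one_pos⟩
  · refine iInf₂_eq_top.mpr fun l hl => ?_
    rw [EReal.eq_top_iff_forall_lt]
    intro M
    obtain ⟨x, hx, hM⟩ := unbdd l hl M
    exact lt_of_lt_of_le (EReal.coe_lt_coe_iff.mpr hM) (le_iSup₂_of_le x hx le_rfl)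
end

section
/- Let E be an infinite-dimensional reflexive real Banach space, T : E → E a non-zero compact linear operator, φ : E → ℝ a lower semicontinuous, convex and coercive functional, and r > φ(0); set X = {x ∈ E : φ(T(x)) ≤ r}. Then for every real λ ≠ 0, the function x ↦ φ(T(x) − λx) is unbounded above on X; that is, sup_{x∈X} φ(T(x) − λx) = +∞. -/
/-!
By coercivity, `T` is bounded on `X`, so it suffices to find points of `X` of arbitrarily large norm:
at such points `T x - l • x` has large norm, and coercivity applies once more. Such points exist for
two reasons. The sublevel set `{φ ≤ r}` is closed, convex and absorbing, hence a neighbourhood of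
`0` by Baire's theorem (`sublevel_mem_nhds_zero`). A compact operator on an infinite-dimensional
space is not bounded below (`exists_norm_eq_norm_lt`), so there are `x` of any prescribed norm
with `T x` as close to `0` as desired.
-/

/-- Baire's theorem, applied to the dilates of `{φ ≤ r}`, gives an interior point `a`; a convex
combination of `a` with a small negative multiple of `a` moves the interior point to `0`. -/
lemma sublevel_mem_nhds_zero {E : Type*} [NormedAddCommGroup E] [NormedSpace ℝ E]
    [CompleteSpace E] (φ : E → ℝ) (hφlsc : LowerSemicontinuous φ)
    (hφconv : ConvexOn ℝ Set.univ φ) (r : ℝ) (hr : φ 0 < r) :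
    {x : E | φ x ≤ r} ∈ nhds (0 : E) := by
  set C : Set E := {x : E | φ x ≤ r} with hC
  have hCclosed : IsClosed C := hφlsc.isClosed_preimage r
  have hCconv : Convex ℝ C := by
    have := hφconv.convex_le r
    simpa [hC] using this
  have habs : ∀ x : E, ∃ n : ℕ, ((n : ℝ) + 1)⁻¹ • x ∈ C := by
    intro x
    obtain ⟨n, hn⟩ := exists_nat_gt ((φ x - φ 0) / (r - φ 0))
    refine ⟨n, ?_⟩
    rw [div_lt_iff₀ (by linarith)] at hn
    have hn1 : (0 : ℝ) < (n : ℝ) + 1 := by positivity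
    have ht1 : ((n : ℝ) + 1)⁻¹ ≤ 1 := inv_le_one_of_one_le₀ (by linarith [n.cast_nonneg (α := ℝ)])
    have h := hφconv.2 (Set.mem_univ x) (Set.mem_univ (0 : E)) (inv_nonneg.2 hn1.le)
      (sub_nonneg.2 ht1) (by ring)
    simp only [smul_zero, add_zero, smul_eq_mul] at h
    refine h.trans ?_
    have h2 : ((n : ℝ) + 1)⁻¹ * (φ x - φ 0) ≤ r - φ 0 := by
      rw [inv_mul_le_iff₀ hn1]
      linarith
    linarith
  obtain ⟨n, y, hy⟩ := nonempty_interior_of_iUnion_of_closed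
    (f := fun n : ℕ => (fun x : E => ((n : ℝ) + 1)⁻¹ • x) ⁻¹' C)
    (fun n => hCclosed.preimage (continuous_const_smul _))
    (Set.eq_univ_of_forall fun x => Set.mem_iUnion.2 (habs x))
  have hn0 : ((n : ℝ) + 1)⁻¹ ≠ 0 := by positivity
  have ha : ((n : ℝ) + 1)⁻¹ • y ∈ interior C := by
    have := (isOpenMap_smul₀ hn0).image_interior_subset
      ((fun x : E => ((n : ℝ) + 1)⁻¹ • x) ⁻¹' C) (Set.mem_image_of_mem _ hy)
    exact interior_mono (Set.image_preimage_subset _ _) this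
  generalize ((n : ℝ) + 1)⁻¹ • y = a at ha
  obtain ⟨m, hm⟩ := habs (-a)
  have hm1 : (0 : ℝ) < (m : ℝ) + 1 := by positivity
  -- With `t = 1 / (m + 1)`, the weight `s = t / (1 + t) = 1 / (m + 2)` solves
  -- `s • a + (1 - s) • (-t • a) = 0`.
  have h0 := hCconv.combo_interior_self_mem_interior ha hm
    (a := ((m : ℝ) + 2)⁻¹) (b := ((m : ℝ) + 1) / ((m : ℝ) + 2)) (by positivity) (by positivity)
    (by field_simp; ring)
  have he : ((m : ℝ) + 2)⁻¹ • a + (((m : ℝ) + 1) / ((m : ℝ) + 2)) • ((m : ℝ) + 1)⁻¹ • (-a)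
      = 0 := by
    rw [smul_smul, smul_neg, ← sub_eq_add_neg, ← sub_smul]
    have : ((m : ℝ) + 2)⁻¹ - ((m : ℝ) + 1) / ((m : ℝ) + 2) * ((m : ℝ) + 1)⁻¹ = 0 := by
      field_simp
      ring
    rw [this, zero_smul]
  rw [he] at h0
  exact mem_interior_iff_mem_nhds.1 h0

/-- Were `T` bounded below, it would be a closed embedding, and the closed unit ball would be
compact as the preimage of a compact set. -/
lemma exists_norm_eq_norm_lt {E : Type*} [NormedAddCommGroup E] [NormedSpace ℝ E]
    [CompleteSpace E] (hinfdim : ¬ FiniteDimensional ℝ E)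
    (T : E →L[ℝ] E) (hTcpt : IsCompactOperator T) {N δ : ℝ} (hN : 0 < N) (hδ : 0 < δ) :
    ∃ x : E, ‖x‖ = N ∧ ‖T x‖ < δ := by
  by_contra! hcon
  apply hinfdim
  have hbelow : ∀ x : E, ‖x‖ ≤ (N / δ) * ‖T x‖ := by
    intro x
    rcases eq_or_ne x 0 with rfl | hx
    · simp
    have hx' : 0 < ‖x‖ := norm_pos_iff.2 hx
    have h := hcon ((N / ‖x‖) • x) (by
      rw [norm_smul, Real.norm_of_nonneg (by positivity)]; field_simp)
    rw [map_smul, norm_smul, Real.norm_of_nonneg (by positivity)] at h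
    rw [div_mul_eq_mul_div, le_div_iff₀ hδ]
    rw [div_mul_eq_mul_div, le_div_iff₀ hx'] at h
    linarith
  have hanti : AntilipschitzWith (N / δ).toNNReal T :=
    T.antilipschitz_of_bound (by
      intro x
      rw [Real.coe_toNNReal _ (by positivity)]
      exact hbelow x)
  have hemb : Topology.IsClosedEmbedding T := hanti.isClosedEmbedding T.uniformContinuous
  have hK : IsCompact (closure (T '' Metric.closedBall 0 1)) :=
    hTcpt.isCompact_closure_image_closedBall 1
  have hball : IsCompact (Metric.closedBall (0 : E) 1) :=
    (hemb.isCompact_preimage hK).of_isClosed_subset Metric.isClosed_closedBall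
      fun x hx => subset_closure (Set.mem_image_of_mem T hx)
  exact FiniteDimensional.of_isCompact_closedBall₀ ℝ one_pos hball

/-- Let `E` be an infinite-dimensional reflexive real Banach space,
`T : E → E` a non-zero compact linear operator, `φ : E → ℝ` a lower
semicontinuous, convex and coercive functional, `r > φ(0)`, and
`X = {x ∈ E : φ(T x) ≤ r}`. Then for every real `λ ≠ 0`,
`sup_{x∈X} φ(T x − λ x) = +∞`. -/
theorem ricceri_sup_shifted_eq_top
    {E : Type*} [NormedAddCommGroup E] [NormedSpace ℝ E] [CompleteSpace E]
    (hinfdim : ¬ FiniteDimensional ℝ E)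
    (hrefl : Function.Surjective (NormedSpace.inclusionInDoubleDual ℝ E))
    (T : E →L[ℝ] E) (hTcpt : IsCompactOperator T) (hT0 : T ≠ 0)
    (φ : E → ℝ) (hφlsc : LowerSemicontinuous φ) (hφconv : ConvexOn ℝ Set.univ φ)
    (hφcoer : Filter.Tendsto φ (Filter.comap norm Filter.atTop) Filter.atTop)
    (r : ℝ) (hr : φ 0 < r) :
    ∀ l : ℝ, l ≠ 0 →
      (⨆ x ∈ {x : E | φ (T x) ≤ r}, ((φ (T x - l • x) : ℝ) : EReal)) = (⊤ : EReal) := by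
  intro l hl
  rw [EReal.eq_top_iff_forall_lt]
  intro M
  obtain ⟨R, hR⟩ : ∃ R : ℝ, ∀ y : E, R ≤ ‖y‖ → max r M < φ y := by
    have h := hφcoer.eventually (Filter.eventually_gt_atTop (max r M))
    rw [Filter.eventually_comap] at h
    obtain ⟨R, hR⟩ := Filter.eventually_atTop.1 h
    exact ⟨R, fun y hy => hR _ hy y rfl⟩
  obtain ⟨δ, hδ, hball⟩ := Metric.mem_nhds_iff.1 (sublevel_mem_nhds_zero φ hφlsc hφconv r hr)
  have hl' : 0 < |l| := abs_pos.2 hl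
  -- A point of norm `N` has `‖l • x‖ = 2 (|R| + 1)`, while `‖T x‖ < R` on `X`.
  obtain ⟨x, hxN, hxT⟩ := exists_norm_eq_norm_lt hinfdim T hTcpt
    (N := 2 * (|R| + 1) / |l|) (by positivity) hδ
  have hxX : φ (T x) ≤ r := hball (by simpa using hxT)
  have hTR : ‖T x‖ < R := by
    by_contra! h
    exact absurd (hR _ h) (not_lt.2 (hxX.trans (le_max_left _ _)))
  have hlx : ‖l • x‖ = 2 * (|R| + 1) := by
    rw [norm_smul, hxN, Real.norm_eq_abs]
    field_simp
  have hbig : R ≤ ‖T x - l • x‖ := by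
    have h := norm_sub_norm_le (l • x) (T x)
    rw [norm_sub_rev] at h
    linarith [le_abs_self R]
  have hM : M < φ (T x - l • x) := (le_max_right _ _).trans_lt (hR _ hbig)
  exact (EReal.coe_lt_coe_iff.2 hM).trans_le
    (le_iSup₂ (f := fun (x : E) (_ : x ∈ {x : E | φ (T x) ≤ r}) =>
      ((φ (T x - l • x) : ℝ) : EReal)) x hxX)
end

section
/- Let X and Y be topological spaces with X connected, and let F : X → Set Y be a multifunction with non-empty values which is lower semicontinuous, meaning that for every open set V ⊆ Y the set {x ∈ X : F(x) ∩ V ≠ ∅} is open in X. Assume that the set {x ∈ X : F(x) is connected} is dense in X. Then the graph {(x,y) ∈ X × Y : y ∈ F(x)} is a connected subset of X × Y. -/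
/-!
Lower semicontinuity makes the projection from the graph of `F` to `X` an open map
(`isOpen_proj_graph_inter`). If open sets `u`, `v` cover the graph and both meet it, the projections
of the two traces are therefore non-empty open sets, and they cover `X` because `F` has non-empty
values. Connectedness of `X` makes them overlap in a non-empty open set, which by density contains
a point `x` with `F x` connected. The fibre over `x` meets both `u` and `v`, hence meets `u ∩ v`.
-/

/-- For lower semicontinuous `F`, the projection to `X` of a relatively open subset of the graph
is open. -/
theorem isOpen_proj_graph_inter {X Y : Type*} [TopologicalSpace X] [TopologicalSpace Y]
    (F : X → Set Y)
    (hlsc : ∀ V : Set Y, IsOpen V → IsOpen {x : X | (F x ∩ V).Nonempty})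
    {u : Set (X × Y)} (hu : IsOpen u) : IsOpen {x : X | ∃ y ∈ F x, (x, y) ∈ u} := by
  rw [isOpen_iff_forall_mem_open]
  rintro x ⟨y, hy, hxy⟩
  obtain ⟨U, V, hU, hV, hxU, hyV, hUV⟩ := isOpen_prod_iff.1 hu x y hxy
  refine ⟨U ∩ {x | (F x ∩ V).Nonempty}, ?_, hU.inter (hlsc V hV), hxU, y, hy, hyV⟩
  rintro x' ⟨hx', y', hy', hyV'⟩
  exact ⟨y', hy', hUV ⟨hx', hyV'⟩⟩

/-- **Theorem B of Ricceri's paper** ([3], Proposition 5.3).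
Let `X`, `Y` be topological spaces with `X` connected, and let `F : X → Set Y`
be a lower semicontinuous multifunction with non-empty values. If the set
`{x ∈ X : F x is connected}` is dense in `X`, then the graph
`{(x,y) ∈ X × Y : y ∈ F x}` is connected. -/
theorem ricceri_graph_connected
    {X Y : Type*} [TopologicalSpace X] [TopologicalSpace Y] [ConnectedSpace X]
    (F : X → Set Y) (hne : ∀ x, (F x).Nonempty)
    (hlsc : ∀ V : Set Y, IsOpen V → IsOpen {x : X | (F x ∩ V).Nonempty})
    (hdense : Dense {x : X | IsConnected (F x)}) :
    IsConnected {p : X × Y | p.2 ∈ F p.1} := by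
  refine ⟨?_, ?_⟩
  · obtain ⟨x⟩ := (inferInstance : Nonempty X)
    obtain ⟨y, hy⟩ := hne x
    exact ⟨(x, y), hy⟩
  rintro u v hu hv huv ⟨⟨a, b⟩, hab, habu⟩ ⟨⟨c, d⟩, hcd, hcdv⟩
  have hu' := isOpen_proj_graph_inter F hlsc hu
  have hv' := isOpen_proj_graph_inter F hlsc hv
  obtain ⟨z, -, hz⟩ := isPreconnected_univ (α := X) _ _ hu' hv'
    (fun x _ => by
      obtain ⟨y, hy⟩ := hne x
      rcases huv (show (x, y) ∈ {p : X × Y | p.2 ∈ F p.1} from hy) with h | h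
      · exact Or.inl ⟨y, hy, h⟩
      · exact Or.inr ⟨y, hy, h⟩)
    ⟨a, trivial, b, hab, habu⟩ ⟨c, trivial, d, hcd, hcdv⟩
  obtain ⟨x, ⟨⟨y₁, h₁, hy₁⟩, ⟨y₂, h₂, hy₂⟩⟩, hx⟩ :=
    hdense.inter_open_nonempty _ (hu'.inter hv') ⟨z, hz⟩
  have hc : Continuous (fun y : Y => (x, y)) := by fun_prop
  obtain ⟨y, hy, hyuv⟩ := hx.isPreconnected _ _ (hu.preimage hc) (hv.preimage hc)
    (fun y hy => huv (show (x, y) ∈ {p : X × Y | p.2 ∈ F p.1} from hy))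
    ⟨y₁, h₁, hy₁⟩ ⟨y₂, h₂, hy₂⟩
  exact ⟨(x, y), hy, hyuv⟩
end

section
/- Let X be a topological space, I ⊆ ℝ a compact interval, and S, T ⊆ X × I. For (x,λ) ∈ X × I write S_x = {μ ∈ I : (x,μ) ∈ S} and S^λ = {u ∈ X : (u,λ) ∈ S}, and similarly for T. Assume that S is connected (as a subspace of X × I) and S^λ ≠ ∅ for all λ ∈ I, while T is closed in X × I and T_x is non-empty and connected for all x ∈ X. Then S ∩ T ≠ ∅. -/
/-!
Let `A` be the set of points `(x, l)` lying on or above some point of `T_x`, and `B` the set of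
those lying on or below some point of `T_x`. Both are closed, being projections along the compact
interval of closed sets. They cover `X × ℝ` because `T_x` is non-empty; `A` contains the points
of `S` at height `b` and `B` those at height `a`. As `S` is connected, it meets `A ∩ B`. A point
of `A ∩ B` has its height between two points of the connected, hence order-convex, set `T_x`,
so it belongs to `T`.
-/

/-- The parameter `m` ranges over the compact set `[a, b]`, and projecting along a compact factor
is a closed map. -/
lemma isClosed_exists_section {X : Type*} [TopologicalSpace X] {a b : ℝ} {T : Set (X × ℝ)}
    (hTsub : T ⊆ Set.univ ×ˢ Set.Icc a b) (hT : IsClosed T) {R : Set (ℝ × ℝ)} (hR : IsClosed R) :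
    IsClosed {p : X × ℝ | ∃ m, (p.1, m) ∈ T ∧ (m, p.2) ∈ R} := by
  have hC : IsClosed {q : (X × ℝ) × Set.Icc a b |
      (q.1.1, (q.2 : ℝ)) ∈ T ∧ ((q.2 : ℝ), q.1.2) ∈ R} :=
    (hT.preimage (f := fun q : (X × ℝ) × Set.Icc a b => (q.1.1, (q.2 : ℝ))) (by fun_prop)).inter
      (hR.preimage (f := fun q : (X × ℝ) × Set.Icc a b => ((q.2 : ℝ), q.1.2)) (by fun_prop))
  convert isClosedMap_fst_of_compactSpace _ hC using 1
  ext p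
  constructor
  · rintro ⟨m, hm, hr⟩
    exact ⟨(p, ⟨m, (hTsub hm).2⟩), ⟨hm, hr⟩, rfl⟩
  · rintro ⟨q, ⟨hm, hr⟩, rfl⟩
    exact ⟨q.2, hm, hr⟩

/-- **Theorem C of Ricceri's paper** ([1], Theorem 2.3).
Let `X` be a topological space, `I = [a,b]` a compact interval, and
`S, T ⊆ X × I`. Assume `S` is connected and `S^λ ≠ ∅` for all `λ ∈ I`, while
`T` is closed and `T_x` is non-empty and connected for all `x ∈ X`. Then
`S ∩ T ≠ ∅`. -/
theorem ricceri_intersection_nonempty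
    {X : Type*} [TopologicalSpace X]
    (a b : ℝ) (hab : a ≤ b) (S T : Set (X × ℝ))
    (hSsub : S ⊆ Set.univ ×ˢ Set.Icc a b) (hTsub : T ⊆ Set.univ ×ˢ Set.Icc a b)
    (hSconn : IsConnected S)
    (hSsec : ∀ l ∈ Set.Icc a b, ∃ u : X, (u, l) ∈ S)
    (hTclosed : IsClosed T)
    (hTne : ∀ x : X, {m : ℝ | (x, m) ∈ T}.Nonempty)
    (hTconn : ∀ x : X, IsPreconnected {m : ℝ | (x, m) ∈ T}) :
    (S ∩ T).Nonempty := by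
  have hA := isClosed_exists_section hTsub hTclosed
    (R := {r : ℝ × ℝ | r.1 ≤ r.2}) (isClosed_le continuous_fst continuous_snd)
  have hB := isClosed_exists_section hTsub hTclosed
    (R := {r : ℝ × ℝ | r.2 ≤ r.1}) (isClosed_le continuous_snd continuous_fst)
  obtain ⟨u, hu⟩ := hSsec b ⟨hab, le_rfl⟩
  obtain ⟨v, hv⟩ := hSsec a ⟨le_rfl, hab⟩
  obtain ⟨m, hm⟩ := hTne u
  obtain ⟨n, hn⟩ := hTne v
  obtain ⟨p, hpS, ⟨m₁, hm₁, h₁⟩, ⟨m₂, hm₂, h₂⟩⟩ :=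
    isPreconnected_closed_iff.1 hSconn.isPreconnected _ _ hA hB
      (fun p _ => by
        obtain ⟨k, hk⟩ := hTne p.1
        exact (le_total k p.2).imp (fun h => ⟨k, hk, h⟩) (fun h => ⟨k, hk, h⟩))
      ⟨(u, b), hu, m, hm, (hTsub hm).2.2⟩ ⟨(v, a), hv, n, hn, (hTsub hn).2.1⟩
  exact ⟨p, hpS, (hTconn p.1).ordConnected.out hm₁ hm₂ ⟨h₁, h₂⟩⟩
end
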